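/- arXiv:1711.09028 — 2 statements merged into one kernel-verified Lean document; each statement's English description precedes it below -/
import Mathlib

section
/- Let (M,M') be a matroid perspective on a finite ground set E, and call a subset X ⊆ E feasible if X is independent in M and spanning in M'. Then: (i) the collection ℱ of feasible sets is nonempty; (ii) ℱ satisfies the delta-matroid symmetric exchange axiom: for all X, Y ∈ ℱ and every x ∈ X △ Y (symmetric difference), there exists y ∈ X △ Y (possibly y = x) such that X △ {x,y} ∈ ℱ; (iii) ℱ is saturated: whenever X ⊆ Y ⊆ Z with X ∈ ℱ and Z ∈ ℱ, also Y ∈ ℱ. -/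
open Finset

/-- A finite "pre-matroid": a finite ground set together with a rank function. -/
structure PreMatroid (α : Type*) where
  E : Finset α
  rk : Finset α → ℕ

namespace PreMatroid

variable {α : Type*} [DecidableEq α] {R : Type*} [CommRing R]

/-- The matroid axioms: `rk X ≤ |X|`, monotonicity, and submodularity
(all on subsets of the ground set). -/
def IsMatroid (M : PreMatroid α) : Prop :=
  (∀ X, X ⊆ M.E → M.rk X ≤ X.card) ∧
  (∀ X Y, X ⊆ Y → Y ⊆ M.E → M.rk X ≤ M.rk Y) ∧
  (∀ X Y, X ⊆ M.E → Y ⊆ M.E → M.rk (X ∪ Y) + M.rk (X ∩ Y) ≤ M.rk X + M.rk Y)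

/-- The restriction `M|A`: ground set `A`, rank function the restriction of `rk`. -/
def restrict (M : PreMatroid α) (A : Finset α) : PreMatroid α :=
  ⟨A, M.rk⟩

/-- The contraction `M/A`: ground set `E ∖ A`, rank function `B ↦ rk (B ∪ A) − rk A`. -/
def contract (M : PreMatroid α) (A : Finset α) : PreMatroid α :=
  ⟨M.E \ A, fun B => M.rk (B ∪ A) - M.rk A⟩

/-- The deletion `M∖A ≔ M|(E∖A)`. -/
def delete (M : PreMatroid α) (A : Finset α) : PreMatroid α :=
  M.restrict (M.E \ A)

/-- The rank `rk(M) = rk(E(M))` of a matroid. -/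
def rank (M : PreMatroid α) : ℕ := M.rk M.E

/-- The Tutte polynomial `𝔗_M(x,y) = Σ_{A ⊆ E} (x−1)^{rk(M)−rk(A)} (y−1)^{|A|−rk(A)}`,
evaluated at elements of a commutative ring. -/
def tutte (M : PreMatroid α) (x y : R) : R :=
  ∑ A ∈ M.E.powerset, (x - 1) ^ (M.rank - M.rk A) * (y - 1) ^ (A.card - M.rk A)

end PreMatroid

namespace PreMatroid

/-- `X` is independent in `M` if `rk(X) = |X|`. -/
def Indep {α : Type*} (M : PreMatroid α) (X : Finset α) : Prop :=
  M.rk X = X.card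

/-- `X` is spanning in `M` if `rk(X) = rk(E(M))`. -/
def Spanning {α : Type*} (M : PreMatroid α) (X : Finset α) : Prop :=
  M.rk X = M.rk M.E

/-- `(M, M')` is a matroid perspective: `M` and `M'` are matroids on the same ground
set and `rk_M(B) − rk_M(A) ≥ rk_{M'}(B) − rk_{M'}(A)` for all `A ⊆ B ⊆ E`. -/
def IsPerspective {α : Type*} [DecidableEq α] (M M' : PreMatroid α) : Prop :=
  M.IsMatroid ∧ M'.IsMatroid ∧ M'.E = M.E ∧
    ∀ A B : Finset α, A ⊆ B → B ⊆ M.E →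
      ((M'.rk B : ℤ) - M'.rk A) ≤ (M.rk B : ℤ) - M.rk A

/-- `X ⊆ E` is feasible for the perspective `(M, M')` if it is independent in `M`
and spanning in `M'`. -/
def Feasible {α : Type*} (M M' : PreMatroid α) (X : Finset α) : Prop :=
  X ⊆ M.E ∧ Indep M X ∧ Spanning M' X

/-!
For `A ⊆ B`, extend `A` inside `B` to a set `J` with `rk J = rk B` by adding only `rk B - rk A`
elements. If `A` is independent in `M` and `B` is spanning in `M'`, the perspective inequality
makes `J` feasible, whether the ranks are taken in `M` or in `M'`. With ranks in `M`, the
pair `∅ ⊆ E` gives a feasible set, and `(X ∩ Y) ∪ {x} ⊆ X ∪ {x}` gives the exchange for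
`x ∈ Y \ X`; with ranks in `M'`, `X \ {x} ⊆ (X \ {x}) ∪ Y` gives it for `x ∈ X \ Y`. In either
exchange, counting ranks shows that `J` differs from `X ∆ {x}` in at most one element.
-/

open scoped symmDiff

section

variable {α : Type*} [DecidableEq α] {M M' : PreMatroid α} {A B J X Y Z : Finset α} {x y : α}

lemma exists_eq_symmDiff_pair {D : Finset α} (hx : x ∈ D)
    (hsub : (X ∆ {x}) ∆ J ⊆ D.erase x) (hcard : #((X ∆ {x}) ∆ J) ≤ 1) :
    ∃ y ∈ D, J = X ∆ {x, y} := by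
  have hJ : J = (X ∆ {x}) ∆ ((X ∆ {x}) ∆ J) := (symmDiff_symmDiff_cancel_left _ _).symm
  obtain hempty | ⟨y, hy⟩ := (Nat.le_one_iff_eq_zero_or_eq_one.1 hcard).imp card_eq_zero.1
    card_eq_one.1
  · refine ⟨x, hx, ?_⟩
    rwa [hempty, ← bot_eq_empty, symmDiff_bot, ← pair_eq_singleton] at hJ
  · obtain ⟨hyx, hyD⟩ := mem_erase.1 (hsub (hy ▸ mem_singleton_self y))
    have hpair : ({x} : Finset α) ∆ {y} = {x, y} :=
      (disjoint_singleton.2 hyx.symm).symmDiff_eq_sup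
    exact ⟨y, hyD, by rwa [hy, symmDiff_assoc, hpair] at hJ⟩

namespace IsMatroid

lemma rk_le_card (hM : M.IsMatroid) (hX : X ⊆ M.E) : M.rk X ≤ #X :=
  hM.1 X hX

lemma rk_mono (hM : M.IsMatroid) (hXY : X ⊆ Y) (hY : Y ⊆ M.E) : M.rk X ≤ M.rk Y :=
  hM.2.1 X Y hXY hY

lemma rk_union_add_rk_inter_le (hM : M.IsMatroid) (hX : X ⊆ M.E) (hY : Y ⊆ M.E) :
    M.rk (X ∪ Y) + M.rk (X ∩ Y) ≤ M.rk X + M.rk Y :=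
  hM.2.2 X Y hX hY

lemma rk_le_rk_add_card_sdiff (hM : M.IsMatroid) (hXY : X ⊆ Y) (hY : Y ⊆ M.E) :
    M.rk Y ≤ M.rk X + #(Y \ X) := by
  have hsubmod := hM.rk_union_add_rk_inter_le (hXY.trans hY) (sdiff_subset.trans hY : Y \ X ⊆ M.E)
  have hcard := hM.rk_le_card (sdiff_subset.trans hY : Y \ X ⊆ M.E)
  rw [union_sdiff_of_subset hXY] at hsubmod
  lia

lemma rk_insert_le (hM : M.IsMatroid) (h : insert x X ⊆ M.E) : M.rk (insert x X) ≤ M.rk X + 1 :=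
  calc
    M.rk (insert x X) ≤ M.rk X + #(insert x X \ X) :=
      hM.rk_le_rk_add_card_sdiff (subset_insert x X) h
    _ ≤ M.rk X + 1 := by
      gcongr
      exact card_le_card (t := {x}) (by grind)

lemma rk_insert_add_rk_le (hM : M.IsMatroid) (hXY : X ⊆ Y) (h : insert x Y ⊆ M.E) :
    M.rk (insert x Y) + M.rk X ≤ M.rk (insert x X) + M.rk Y := by
  have hY : Y ⊆ M.E := (subset_insert x Y).trans h
  have hX : insert x X ⊆ M.E := (insert_subset_insert x hXY).trans h
  have hsubmod := hM.rk_union_add_rk_inter_le hX hY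
  have hunion : insert x X ∪ Y = insert x Y := by rw [insert_union, union_eq_right.2 hXY]
  have hinter : M.rk X ≤ M.rk (insert x X ∩ Y) :=
    hM.rk_mono (subset_inter (subset_insert x X) hXY) (inter_subset_right.trans hY)
  rw [hunion] at hsubmod
  lia

lemma indep_empty (hM : M.IsMatroid) : M.Indep ∅ :=
  Nat.le_zero.1 (hM.rk_le_card (empty_subset _))

lemma indep_of_subset (hM : M.IsMatroid) (hXY : X ⊆ Y) (hYE : Y ⊆ M.E) (hY : M.Indep Y) :
    M.Indep X := by
  have hrk := hM.rk_le_rk_add_card_sdiff hXY hYE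
  have hX := hM.rk_le_card (hXY.trans hYE)
  have hcard := card_sdiff_add_card_eq_card hXY
  unfold Indep at *
  lia

lemma spanning_of_subset (hM : M.IsMatroid) (hXY : X ⊆ Y) (hYE : Y ⊆ M.E) (hX : M.Spanning X) :
    M.Spanning Y :=
  (hM.rk_mono hYE subset_rfl).antisymm (hX ▸ hM.rk_mono hXY hYE)

end IsMatroid

/-- For a matroid `M` and `A ⊆ B`, the set `J \ A` is a basis of `(M|B)/A`. Here `A` need not be
independent, and the rank of the contraction is written without subtraction. -/
structure IsRelBasis (M : PreMatroid α) (A J B : Finset α) : Prop where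
  left_subset : A ⊆ J
  subset_right : J ⊆ B
  rk_eq : M.rk J = M.rk B
  card_sdiff_add_rk : #(J \ A) + M.rk A = M.rk B

namespace IsRelBasis

lemma refl (M : PreMatroid α) (A : Finset α) : M.IsRelBasis A A A :=
  ⟨subset_rfl, subset_rfl, rfl, by simp⟩

lemma insert_right (hJ : M.IsRelBasis A J B) (hM : M.IsMatroid) (hxB : insert x B ⊆ M.E)
    (hx : M.rk (insert x J) = M.rk J) : M.IsRelBasis A J (insert x B) := by
  have hrk : M.rk (insert x B) = M.rk B := by
    have hsubmod := hM.rk_insert_add_rk_le hJ.subset_right hxB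
    have hmono := hM.rk_mono (subset_insert x B) hxB
    lia
  exact ⟨hJ.left_subset, hJ.subset_right.trans (subset_insert x B), hJ.rk_eq.trans hrk.symm,
    hJ.card_sdiff_add_rk.trans hrk.symm⟩

lemma insert_insert (hJ : M.IsRelBasis A J B) (hM : M.IsMatroid) (hxB : insert x B ⊆ M.E)
    (hx : M.rk (insert x J) ≠ M.rk J) : M.IsRelBasis A (insert x J) (insert x B) := by
  have hJB : insert x J ⊆ insert x B := insert_subset_insert x hJ.subset_right
  have hxJ : x ∉ J := fun hmem ↦ hx (by rw [insert_eq_of_mem hmem])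
  have hxJA : x ∉ J \ A := fun hmem ↦ hxJ (mem_sdiff.1 hmem).1
  have hrk : M.rk (insert x J) = M.rk J + 1 := by
    have hle := hM.rk_insert_le (hJB.trans hxB)
    have hmono := hM.rk_mono (subset_insert x J) (hJB.trans hxB)
    lia
  have hrk_eq : M.rk (insert x J) = M.rk (insert x B) := by
    have hsubmod := hM.rk_insert_add_rk_le hJ.subset_right hxB
    have hmono := hM.rk_mono hJB hxB
    have hJ_rk := hJ.rk_eq
    lia
  refine ⟨hJ.left_subset.trans (subset_insert x J), hJB, hrk_eq, ?_⟩
  rw [insert_sdiff_of_notMem _ (fun hxA ↦ hxJ (hJ.left_subset hxA)), card_insert_of_notMem hxJA,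
    ← hrk_eq, hrk, hJ.rk_eq, ← hJ.card_sdiff_add_rk]
  lia

end IsRelBasis

lemma IsMatroid.exists_isRelBasis (hM : M.IsMatroid) (hAB : A ⊆ B) (hB : B ⊆ M.E) :
    ∃ J, M.IsRelBasis A J B := by
  suffices hunion : ∀ D, A ∪ D ⊆ M.E → ∃ J, M.IsRelBasis A J (A ∪ D) by
    simpa only [union_eq_right.2 hAB] using hunion B (union_subset (hAB.trans hB) hB)
  intro D hD
  induction D using Finset.induction_on with
  | empty => exact ⟨A, by simpa only [union_empty] using IsRelBasis.refl M A⟩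
  | insert x D _ ih =>
    rw [union_insert] at hD ⊢
    obtain ⟨J, hJ⟩ := ih ((subset_insert x _).trans hD)
    by_cases hx : M.rk (insert x J) = M.rk J
    · exact ⟨J, hJ.insert_right hM hD hx⟩
    · exact ⟨insert x J, hJ.insert_insert hM hD hx⟩

lemma IsRelBasis.indep (hJ : M.IsRelBasis A J B) (hA : M.Indep A) : M.Indep J := by
  have hcard := card_sdiff_add_card_eq_card hJ.left_subset
  have hrk := hJ.rk_eq.trans hJ.card_sdiff_add_rk.symm
  unfold Indep at *
  lia

lemma IsRelBasis.spanning (hJ : M.IsRelBasis A J B) (hB : M.Spanning B) : M.Spanning J :=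
  hJ.rk_eq.trans hB

namespace IsPerspective

lemma isMatroid_left (h : IsPerspective M M') : M.IsMatroid := h.1

lemma isMatroid_right (h : IsPerspective M M') : M'.IsMatroid := h.2.1

lemma ground_eq (h : IsPerspective M M') : M'.E = M.E := h.2.2.1

lemma rk_add_rk_le (h : IsPerspective M M') (hXY : X ⊆ Y) (hY : Y ⊆ M.E) :
    M'.rk Y + M.rk X ≤ M.rk Y + M'.rk X := by
  have hrk := h.2.2.2 X Y hXY hY
  lia

lemma feasible_of_isRelBasis_left (h : IsPerspective M M') (hJ : M.IsRelBasis A J B)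
    (hB : B ⊆ M.E) (hA : M.Indep A) (hspan : M'.Spanning B) : Feasible M M' J := by
  have hJB : M'.rk J = M'.rk B := by
    have hpersp := h.rk_add_rk_le hJ.subset_right hB
    have hmono := h.isMatroid_right.rk_mono hJ.subset_right (hB.trans h.ground_eq.ge)
    have hrk := hJ.rk_eq
    lia
  exact ⟨hJ.subset_right.trans hB, hJ.indep hA, hJB.trans hspan⟩

lemma feasible_of_isRelBasis_right (h : IsPerspective M M') (hJ : M'.IsRelBasis A J B)
    (hB : B ⊆ M.E) (hA : M.Indep A) (hspan : M'.Spanning B) : Feasible M M' J := by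
  have hJE : J ⊆ M.E := hJ.subset_right.trans hB
  have hindep : M.Indep J := by
    have hpersp := h.rk_add_rk_le hJ.left_subset hJE
    have hcard := card_sdiff_add_card_eq_card hJ.left_subset
    have hrk := hJ.rk_eq.trans hJ.card_sdiff_add_rk.symm
    have hle := h.isMatroid_left.rk_le_card hJE
    unfold Indep at *
    lia
  exact ⟨hJE, hindep, hJ.spanning hspan⟩

lemma exists_feasible (h : IsPerspective M M') : ∃ X, Feasible M M' X := by
  obtain ⟨J, hJ⟩ := h.isMatroid_left.exists_isRelBasis (empty_subset M.E) subset_rfl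
  exact ⟨J, h.feasible_of_isRelBasis_left hJ subset_rfl h.isMatroid_left.indep_empty
    (congrArg M'.rk h.ground_eq.symm)⟩

lemma feasible_of_subset_of_subset (h : IsPerspective M M') (hXY : X ⊆ Y) (hYZ : Y ⊆ Z)
    (hX : M'.Spanning X) (hZE : Z ⊆ M.E) (hZ : M.Indep Z) : Feasible M M' Y :=
  have hYE : Y ⊆ M.E := hYZ.trans hZE
  ⟨hYE, h.isMatroid_left.indep_of_subset hYZ hZE hZ,
    h.isMatroid_right.spanning_of_subset hXY (hYE.trans h.ground_eq.ge) hX⟩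

lemma exists_feasible_symmDiff_of_mem_of_notMem (h : IsPerspective M M') (hX : Feasible M M' X)
    (hYE : Y ⊆ M.E) (hY : M'.Spanning Y) (hxX : x ∈ X) (hxY : x ∉ Y) :
    ∃ y ∈ X ∆ Y, Feasible M M' (X ∆ {x, y}) := by
  obtain ⟨hXE, hXindep, hXspan⟩ := hX
  have hM' := h.isMatroid_right
  have hAE : X.erase x ⊆ M.E := (erase_subset x X).trans hXE
  have hBE : X.erase x ∪ Y ⊆ M.E := union_subset hAE hYE
  have hB : M'.Spanning (X.erase x ∪ Y) :=
    hM'.spanning_of_subset subset_union_right (hBE.trans h.ground_eq.ge) hY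
  obtain ⟨J, hJ⟩ := hM'.exists_isRelBasis subset_union_left (hBE.trans h.ground_eq.ge)
  have hJfeas : Feasible M M' J := h.feasible_of_isRelBasis_right hJ hBE
    (h.isMatroid_left.indep_of_subset (erase_subset x X) hXE hXindep) hB
  have hcard : #(J \ X.erase x) ≤ 1 := by
    have hinsert : insert x (X.erase x) = X := insert_erase hxX
    have hrk := hM'.rk_insert_le (hinsert.le.trans (hXE.trans h.ground_eq.ge))
    have hJcard := hJ.card_sdiff_add_rk
    rw [hinsert] at hrk
    unfold Spanning at *
    lia
  have hdiff : (X ∆ {x}) ∆ J = J \ X.erase x := by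
    have herase : X ∆ {x} = X.erase x := by
      rw [symmDiff_of_ge (singleton_subset_iff.2 hxX), sdiff_singleton_eq_erase]
    rw [herase, symmDiff_of_le hJ.left_subset]
  have hsub : J \ X.erase x ⊆ (X ∆ Y).erase x := by
    have hJB := hJ.subset_right
    grind [mem_symmDiff]
  obtain ⟨y, hy, rfl⟩ := exists_eq_symmDiff_pair (mem_symmDiff.2 (.inl ⟨hxX, hxY⟩)) (hdiff ▸ hsub)
    (hdiff ▸ hcard)
  exact ⟨y, hy, hJfeas⟩

lemma exists_feasible_symmDiff_of_notMem_of_mem (h : IsPerspective M M') (hX : Feasible M M' X)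
    (hYE : Y ⊆ M.E) (hY : M.Indep Y) (hxX : x ∉ X) (hxY : x ∈ Y) :
    ∃ y ∈ X ∆ Y, Feasible M M' (X ∆ {x, y}) := by
  obtain ⟨hXE, hXindep, hXspan⟩ := hX
  have hM := h.isMatroid_left
  have hBE : insert x X ⊆ M.E := insert_subset (hYE hxY) hXE
  have hB : M'.Spanning (insert x X) :=
    h.isMatroid_right.spanning_of_subset (subset_insert x X) (hBE.trans h.ground_eq.ge) hXspan
  have hA : M.Indep (insert x (X ∩ Y)) :=
    hM.indep_of_subset (insert_subset hxY inter_subset_right) hYE hY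
  obtain ⟨J, hJ⟩ := hM.exists_isRelBasis (insert_subset_insert x inter_subset_left) hBE
  have hJfeas : Feasible M M' J := h.feasible_of_isRelBasis_left hJ hBE hA hB
  have hcard : #(insert x X \ J) ≤ 1 := by
    have hJrk := hJ.rk_eq
    have hJindep := hJ.indep hA
    have hmono := hM.rk_mono (subset_insert x X) hBE
    have hsdiff := card_sdiff_add_card_eq_card hJ.subset_right
    have hinsert := card_insert_of_notMem hxX
    unfold Indep at *
    lia
  have hdiff : (X ∆ {x}) ∆ J = insert x X \ J := by
    have hinsert : X ∆ {x} = insert x X := by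
      rw [(disjoint_singleton_right.2 hxX).symmDiff_eq_sup, sup_eq_union, union_singleton]
    rw [hinsert, symmDiff_of_ge hJ.subset_right]
  have hsub : insert x X \ J ⊆ (X ∆ Y).erase x := by
    have hAJ := hJ.left_subset
    grind [mem_symmDiff]
  obtain ⟨y, hy, rfl⟩ := exists_eq_symmDiff_pair (mem_symmDiff.2 (.inr ⟨hxY, hxX⟩)) (hdiff ▸ hsub)
    (hdiff ▸ hcard)
  exact ⟨y, hy, hJfeas⟩

end IsPerspective

end

/-- The feasible sets of a matroid perspective form a saturated delta-matroid:
they are nonempty, satisfy the symmetric exchange axiom, and are saturated. -/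
theorem perspective_feasible_saturated_deltaMatroid
    {α : Type*} [DecidableEq α] (M M' : PreMatroid α) (h : IsPerspective M M') :
    (∃ X : Finset α, Feasible M M' X) ∧
    (∀ X Y : Finset α, Feasible M M' X → Feasible M M' Y →
      ∀ x ∈ (X \ Y) ∪ (Y \ X), ∃ y ∈ (X \ Y) ∪ (Y \ X),
        Feasible M M' ((X \ ({x, y} : Finset α)) ∪ (({x, y} : Finset α) \ X))) ∧
    (∀ X Y Z : Finset α, X ⊆ Y → Y ⊆ Z →
      Feasible M M' X → Feasible M M' Z → Feasible M M' Y) := by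
  refine ⟨h.exists_feasible, fun X Y hX hY x hx ↦ ?_, fun X Y Z hXY hYZ hX hZ ↦ ?_⟩
  · obtain ⟨hxX, hxY⟩ | ⟨hxY, hxX⟩ := mem_symmDiff.1 hx
    · exact h.exists_feasible_symmDiff_of_mem_of_notMem hX hY.1 hY.2.2 hxX hxY
    · exact h.exists_feasible_symmDiff_of_notMem_of_mem hX hY.1 hY.2.1 hxX hxY
  · exact h.feasible_of_subset_of_subset hXY hYZ hX.2.2 hZ.1 hZ.2.1

end PreMatroid
end

section
/- Let M be a finite matroid on ground set E, let R be a commutative ring, let m1, m2 : 2^E → R be functions, and let a,b,c,d ∈ R. Writing m1·m2 for the pointwise product A ↦ m1(A)·m2(A), the following convolution formula holds: 𝔐_{M, m1·m2}(1−ab, 1−cd) = Σ_{A⊆E} a^{rk(M)−rk(A)} · d^{|A|−rk(A)} · 𝔐_{(M,m1)|A}(1−a, 1−c) · 𝔐_{(M,m2)/A}(1−b, 1−d). -/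
open Finset

namespace PreMatroid

/-- The arithmetic Tutte polynomial of a pair `(M, m)` of a matroid and a
multiplicity function `m : 2^E → R`:
`𝔐_{M,m}(x,y) = Σ_{A⊆E} m(A) (x−1)^{rk M − rk A} (y−1)^{|A|−rk A}`. -/
def arithTutte {α : Type*} (M : PreMatroid α) {R : Type*} [CommRing R]
    (m : Finset α → R) (x y : R) : R :=
  ∑ A ∈ M.E.powerset, m A * (x - 1) ^ (M.rank - M.rk A) * (y - 1) ^ (A.card - M.rk A)

/-!
For `X ⊆ Y` let `w u v X Y = u ^ (rk Y - rk X) * v ^ (nullity Y - nullity X)`. These weights are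
multiplicative along chains, and `w (-u) v` and `w u (-v)` are inverse to each other in the
incidence algebra of the subsets of `E`: up to a sign that depends on `X` and `Y` only, the terms of
`∑ A, w (-u) v X A * w u (-v) A Y` are `w u v X Y * (-1) ^ #(A \ X)`.

On the right-hand side, the factor `d ^ nullity A` turns the arithmetic Tutte polynomial of `M|A`
into `∑ B ⊆ A, m1 B * w 1 (-cd) ∅ B * w (-a) d B A`, and `a ^ (rk M - rk A)` turns that of `M/A`
into `∑ C ⊇ A, w a (-d) A C * m2 C * w (-ab) 1 C E`. Summing over `A` cancels `w (-a) d` against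
`w a (-d)`, so only the terms with `B = C` survive, and these make up the left-hand side.
-/

section Intervals

lemma sum_Icc_mul_sum_Icc_of_inverse {β S : Type*} [Preorder β] [LocallyFiniteOrder β]
    [DecidableEq β] [Semiring S] {f g : β → β → S} {x z : β}
    (hfg : ∀ b c, x ≤ b → b ≤ c → c ≤ z →
      ∑ a ∈ Icc b c, f b a * g a c = if b = c then 1 else 0) (p q : β → S) :
    ∑ a ∈ Icc x z, (∑ b ∈ Icc x a, p b * f b a) * ∑ c ∈ Icc a z, g a c * q c =
      ∑ b ∈ Icc x z, p b * q b := by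
  have inner_sum (b : β) (hb : b ∈ Icc x z) :
      ∑ a ∈ Icc b z, p b * f b a * ∑ c ∈ Icc a z, g a c * q c = p b * q b := calc
    _ = ∑ a ∈ Icc b z, ∑ c ∈ Icc a z, p b * (f b a * g a c) * q c := by
      simp only [mul_sum, mul_assoc]
    _ = ∑ c ∈ Icc b z, ∑ a ∈ Icc b c, p b * (f b a * g a c) * q c :=
      sum_comm' fun a c ↦ by grind [le_trans]
    _ = ∑ c ∈ Icc b z, p b * (if b = c then 1 else 0) * q c := by
      refine sum_congr rfl fun c hc ↦ ?_
      rw [← hfg b c (mem_Icc.1 hb).1 (mem_Icc.1 hc).1 (mem_Icc.1 hc).2, mul_sum, sum_mul]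
    _ = p b * q b := by simp [(mem_Icc.1 hb).2]
  simp only [sum_mul]
  rw [sum_comm' (t' := Icc x z) (s' := fun b ↦ Icc b z) fun a b ↦ by grind [le_trans]]
  exact sum_congr rfl inner_sum

variable {α : Type*} [DecidableEq α] {X Y : Finset α}

lemma powerset_eq_Icc_empty (X : Finset α) : X.powerset = Icc ∅ X := by
  simp [Icc_eq_filter_powerset]

lemma sum_Icc_eq_sum_powerset_sdiff {S : Type*} [AddCommMonoid S] (hXY : X ⊆ Y)
    (f : Finset α → S) : ∑ A ∈ Icc X Y, f A = ∑ D ∈ (Y \ X).powerset, f (D ∪ X) := by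
  refine sum_nbij' (· \ X) (· ∪ X) (by grind) (by grind) (by grind) (by grind) fun A hA ↦ ?_
  rw [sdiff_union_of_subset (mem_Icc.1 hA).1]

lemma sum_Icc_neg_one_pow_card_sdiff {S : Type*} [Ring S] (hXY : X ⊆ Y) :
    ∑ A ∈ Icc X Y, (-1 : S) ^ #(A \ X) = if X = Y then 1 else 0 := by
  have union_sdiff (D : Finset α) (hD : D ∈ (Y \ X).powerset) : (D ∪ X) \ X = D := by
    grind
  have alternating_sum : ∑ D ∈ (Y \ X).powerset, (-1 : S) ^ #D = if Y \ X = ∅ then 1 else 0 := by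
    exact_mod_cast congrArg (Int.cast (R := S)) (sum_powerset_neg_one_pow_card (x := Y \ X))
  have sdiff_eq_empty : Y \ X = ∅ ↔ X = Y :=
    sdiff_eq_empty_iff_subset.trans ⟨hXY.antisymm, fun h ↦ h.ge⟩
  rw [sum_Icc_eq_sum_powerset_sdiff hXY, sum_congr rfl fun D hD ↦ by rw [union_sdiff D hD],
    alternating_sum]
  simp only [sdiff_eq_empty]

end Intervals

section Weights

variable {α : Type*}

/-- The nullity `|A| - rk A` of a set `A`; it is `0` if `rk A > |A|`. -/
def nullity (M : PreMatroid α) (A : Finset α) : ℕ := #A - M.rk A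

/-- Demi-matroids in the sense of Britz, Johnsen, Mayhew and Shiromoto, encoded by their first rank
function: rank and nullity are both monotone, but the rank need not be submodular. -/
structure IsDemimatroid (M : PreMatroid α) : Prop where
  rk_le_card : ∀ ⦃X⦄, X ⊆ M.E → M.rk X ≤ #X
  rk_mono : ∀ ⦃X Y⦄, X ⊆ Y → Y ⊆ M.E → M.rk X ≤ M.rk Y
  nullity_mono : ∀ ⦃X Y⦄, X ⊆ Y → Y ⊆ M.E → M.nullity X ≤ M.nullity Y

/-- The monomial `u ^ rank * v ^ nullity` of the minor `(M|Y)/X`, seen as a function of the interval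
`[X, Y]`. It is multiplicative under concatenation of intervals. -/
def minorWeight {R : Type*} [Monoid R] (M : PreMatroid α) (u v : R) (X Y : Finset α) : R :=
  u ^ (M.rk Y - M.rk X) * v ^ (M.nullity Y - M.nullity X)

variable {M : PreMatroid α} {X Y Z A : Finset α}

lemma minorWeight_one_empty {R : Type*} [Monoid R] (M : PreMatroid α) (v : R) (X : Finset α) :
    M.minorWeight 1 v ∅ X = v ^ M.nullity X := by
  simp [minorWeight, nullity]

lemma IsDemimatroid.minorWeight_mul_minorWeight {R : Type*} [CommMonoid R] (hM : M.IsDemimatroid)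
    (hXY : X ⊆ Y) (hYZ : Y ⊆ Z) (hZ : Z ⊆ M.E) (u v : R) :
    M.minorWeight u v X Y * M.minorWeight u v Y Z = M.minorWeight u v X Z := by
  have hY := hYZ.trans hZ
  have rk_add : M.rk Y - M.rk X + (M.rk Z - M.rk Y) = M.rk Z - M.rk X := by
    rw [add_comm, Nat.sub_add_sub_cancel (hM.rk_mono hYZ hZ) (hM.rk_mono hXY hY)]
  have nullity_add :
      M.nullity Y - M.nullity X + (M.nullity Z - M.nullity Y) = M.nullity Z - M.nullity X := by
    rw [add_comm, Nat.sub_add_sub_cancel (hM.nullity_mono hYZ hZ) (hM.nullity_mono hXY hY)]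
  rw [minorWeight, minorWeight, mul_mul_mul_comm, ← pow_add, ← pow_add, rk_add, nullity_add,
    minorWeight]

variable [DecidableEq α]

lemma IsMatroid.isDemimatroid (hM : M.IsMatroid) : M.IsDemimatroid := by
  obtain ⟨rk_le_card, rk_mono, rk_submod⟩ := hM
  refine ⟨rk_le_card, rk_mono, fun X Y hXY hY ↦ ?_⟩
  have hdiff : Y \ X ⊆ M.E := sdiff_subset.trans hY
  have submod := rk_submod X (Y \ X) (hXY.trans hY) hdiff
  rw [union_sdiff_of_subset hXY] at submod
  have := rk_le_card _ hdiff
  have := card_sdiff_add_card_eq_card hXY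
  unfold nullity
  lia

lemma IsDemimatroid.rk_sub_add_nullity_sub (hM : M.IsDemimatroid) (hXY : X ⊆ Y) (hY : Y ⊆ M.E) :
    (M.rk Y - M.rk X) + (M.nullity Y - M.nullity X) = #(Y \ X) := by
  have := hM.rk_mono hXY hY
  have := hM.nullity_mono hXY hY
  have := hM.rk_le_card hY
  have := hM.rk_le_card (hXY.trans hY)
  have := card_sdiff_add_card_eq_card hXY
  unfold nullity at *
  lia

lemma rank_contract (hA : A ⊆ M.E) : (M.contract A).rank = M.rank - M.rk A := by
  simp [contract, rank, sdiff_union_of_subset hA]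

lemma IsDemimatroid.nullity_contract (hM : M.IsDemimatroid) (hXA : Disjoint X A)
    (hE : X ∪ A ⊆ M.E) : (M.contract A).nullity X = M.nullity (X ∪ A) - M.nullity A := by
  have rank_add_nullity := hM.rk_sub_add_nullity_sub subset_union_right hE
  rw [union_sdiff_cancel_right hXA] at rank_add_nullity
  exact (Nat.eq_sub_of_add_eq' rank_add_nullity).symm

variable {R : Type*} [CommRing R]

lemma IsDemimatroid.minorWeight_neg_mul_minorWeight_neg (hM : M.IsDemimatroid)
    (hXA : X ⊆ A) (hAY : A ⊆ Y) (hY : Y ⊆ M.E) (u v : R) :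
    M.minorWeight (-u) v X A * M.minorWeight u (-v) A Y =
      (-1) ^ (M.nullity Y - M.nullity X) * M.minorWeight u v X Y * (-1) ^ #(A \ X) := by
  have sign : (-1 : R) ^ (M.rk A - M.rk X) * (-1) ^ (M.nullity Y - M.nullity A) =
      (-1) ^ (M.nullity Y - M.nullity X) * (-1) ^ #(A \ X) := by
    have := hM.nullity_mono hXA (hAY.trans hY)
    have := hM.nullity_mono hAY hY
    rw [← hM.rk_sub_add_nullity_sub hXA (hAY.trans hY), ← pow_add, ← pow_add]
    exact neg_one_pow_congr (by grind)
  rw [← hM.minorWeight_mul_minorWeight hXA hAY hY, mul_right_comm, ← sign]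
  simp only [minorWeight, neg_pow u, neg_pow v]
  ring

lemma IsDemimatroid.sum_minorWeight_neg_mul_minorWeight_neg (hM : M.IsDemimatroid)
    (hXY : X ⊆ Y) (hY : Y ⊆ M.E) (u v : R) :
    ∑ A ∈ Icc X Y, M.minorWeight (-u) v X A * M.minorWeight u (-v) A Y =
      if X = Y then 1 else 0 := by
  rw [sum_congr rfl fun A hA ↦ hM.minorWeight_neg_mul_minorWeight_neg
      (mem_Icc.1 hA).1 (mem_Icc.1 hA).2 hY u v,
    ← mul_sum, sum_Icc_neg_one_pow_card_sdiff hXY]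
  split_ifs with h <;> simp [minorWeight, h]

end Weights

section ArithTutte

variable {α : Type*} [DecidableEq α] {R : Type*} [CommRing R] {M : PreMatroid α} {A : Finset α}

lemma IsDemimatroid.pow_nullity_mul_arithTutte_restrict (hM : M.IsDemimatroid) (hA : A ⊆ M.E)
    (m : Finset α → R) (v x y : R) :
    v ^ M.nullity A * arithTutte (M.restrict A) m x y =
      ∑ B ∈ Icc ∅ A, m B * M.minorWeight 1 (v * (y - 1)) ∅ B * M.minorWeight (x - 1) v B A := by
  rw [arithTutte, mul_sum, ← powerset_eq_Icc_empty]
  refine sum_congr rfl fun B hB ↦ ?_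
  have split_pow : v ^ M.nullity A = v ^ M.nullity B * v ^ (M.nullity A - M.nullity B) := by
    rw [← pow_add, Nat.add_sub_of_le (hM.nullity_mono (mem_powerset.1 hB) hA)]
  rw [split_pow, minorWeight_one_empty, mul_pow]
  simp only [minorWeight, restrict, rank, nullity]
  ring

lemma arithTutte_eq_sum_minorWeight (m : Finset α → R) (x y : R) :
    arithTutte M m x y =
      ∑ B ∈ Icc ∅ M.E, m B * M.minorWeight 1 (y - 1) ∅ B * M.minorWeight (x - 1) 1 B M.E := by
  simp only [minorWeight_one_empty]
  simp [arithTutte, minorWeight, rank, nullity, powerset_eq_Icc_empty, mul_right_comm]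

lemma IsDemimatroid.pow_rank_sub_mul_arithTutte_contract (hM : M.IsDemimatroid) (hA : A ⊆ M.E)
    (m : Finset α → R) (u x y : R) :
    u ^ (M.rank - M.rk A) * arithTutte (M.contract A) (fun B ↦ m (B ∪ A)) x y =
      ∑ C ∈ Icc A M.E,
        M.minorWeight u (y - 1) A C * (m C * M.minorWeight (u * (x - 1)) 1 C M.E) := by
  rw [arithTutte, mul_sum, sum_Icc_eq_sum_powerset_sdiff hA]
  refine sum_congr rfl fun D hD ↦ ?_
  have hDE : D ∪ A ⊆ M.E := by grind
  have hDA : Disjoint D A := disjoint_of_subset_left (mem_powerset.1 hD) sdiff_disjoint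
  have rk_le_rk_union : M.rk A ≤ M.rk (D ∪ A) := hM.rk_mono subset_union_right hDE
  have rk_union_le_rank : M.rk (D ∪ A) ≤ M.rank := hM.rk_mono hDE Subset.rfl
  have split_pow :
      u ^ (M.rank - M.rk A) = u ^ (M.rk (D ∪ A) - M.rk A) * u ^ (M.rank - M.rk (D ∪ A)) := by
    rw [← pow_add, add_comm, Nat.sub_add_sub_cancel rk_union_le_rank rk_le_rk_union]
  have corank_contract :
      (M.contract A).rank - (M.contract A).rk D = M.rank - M.rk (D ∪ A) := by
    rw [rank_contract hA]
    exact Nat.sub_sub_sub_cancel_right rk_le_rk_union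
  rw [split_pow, corank_contract, ← nullity, hM.nullity_contract hDA hDE]
  simp only [minorWeight, mul_pow, one_pow, mul_one, rank]
  ring

theorem arithTutte_product_convolution_general {α : Type*} [DecidableEq α] {R : Type*} [CommRing R]
    (M : PreMatroid α) (hM : M.IsDemimatroid) (m1 m2 : Finset α → R) (a b c d : R) :
    arithTutte M (fun A => m1 A * m2 A) (1 - a * b) (1 - c * d) =
      ∑ A ∈ M.E.powerset,
        a ^ (M.rank - M.rk A) * d ^ (A.card - M.rk A) *
          arithTutte (M.restrict A) m1 (1 - a) (1 - c) *
          arithTutte (M.contract A) (fun B => m2 (B ∪ A)) (1 - b) (1 - d) := by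
  symm
  calc
    _ = ∑ A ∈ Icc ∅ M.E,
          (d ^ M.nullity A * arithTutte (M.restrict A) m1 (1 - a) (1 - c)) *
          (a ^ (M.rank - M.rk A) *
            arithTutte (M.contract A) (fun B ↦ m2 (B ∪ A)) (1 - b) (1 - d)) := by
      rw [powerset_eq_Icc_empty]
      exact sum_congr rfl fun A _ ↦ by rw [nullity]; ring
    _ = ∑ A ∈ Icc ∅ M.E,
          (∑ B ∈ Icc ∅ A,
            m1 B * M.minorWeight 1 (-(c * d)) ∅ B * M.minorWeight (-a) d B A) *
          ∑ C ∈ Icc A M.E,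
            M.minorWeight a (-d) A C * (m2 C * M.minorWeight (-(a * b)) 1 C M.E) := by
      refine sum_congr rfl fun A hA ↦ ?_
      have hAE : A ⊆ M.E := (mem_Icc.1 hA).2
      rw [hM.pow_nullity_mul_arithTutte_restrict hAE, hM.pow_rank_sub_mul_arithTutte_contract hAE]
      simp only [sub_sub_cancel_left, mul_neg, mul_comm d c]
    _ = ∑ B ∈ Icc ∅ M.E, m1 B * M.minorWeight 1 (-(c * d)) ∅ B *
          (m2 B * M.minorWeight (-(a * b)) 1 B M.E) :=
      sum_Icc_mul_sum_Icc_of_inverse (fun _ _ _ hBC hC ↦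
        hM.sum_minorWeight_neg_mul_minorWeight_neg hBC hC a d) _ _
    _ = _ := by
      simp only [arithTutte_eq_sum_minorWeight, sub_sub_cancel_left, mul_mul_mul_comm (m1 _),
        ← mul_assoc (m1 _ * m2 _)]

end ArithTutte

/-- The convolution formula for the arithmetic Tutte polynomial of a pointwise
product of multiplicity functions. -/
theorem arithTutte_product_convolution {α : Type*} [DecidableEq α] {R : Type*} [CommRing R]
    (M : PreMatroid α) (hM : M.IsMatroid) (m1 m2 : Finset α → R) (a b c d : R) :
    arithTutte M (fun A => m1 A * m2 A) (1 - a * b) (1 - c * d) =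
      ∑ A ∈ M.E.powerset,
        a ^ (M.rank - M.rk A) * d ^ (A.card - M.rk A) *
          arithTutte (M.restrict A) m1 (1 - a) (1 - c) *
          arithTutte (M.contract A) (fun B => m2 (B ∪ A)) (1 - b) (1 - d) := by
  exact arithTutte_product_convolution_general M hM.isDemimatroid m1 m2 a b c d

end PreMatroid
end
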